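/- arXiv:2112.01647 — 2 statements merged into one kernel-verified Lean document; each statement's English description precedes it below -/
import Mathlib

section
/- Let G be a d-regular graph with adjacency matrix A and non-backtracking matrix B, let β ∈ ℂ be nonzero, and let f : V(G) → ℂ satisfy A f = (β + (d−1)/β) f. Define g on directed edges by g(u,v) = f(u) − β·f(v). Then B g = β g. -/
open scoped Classical

noncomputable section

/-- The directed edges of `G`. -/
def DEdge {V : Type*} (G : SimpleGraph V) : Type _ :=
  {p : V × V // G.Adj p.1 p.2}

instance {V : Type*} [Fintype V] (G : SimpleGraph V) : Fintype (DEdge G) :=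
  Subtype.fintype _

/-- The non-backtracking matrix of `G`: entry at `((u,v),(x,y))` is `1` if `v = x` and
`u ≠ y`, and `0` otherwise. -/
def nbMatrix {V : Type*} (G : SimpleGraph V) : Matrix (DEdge G) (DEdge G) ℂ :=
  fun p q => if p.val.2 = q.val.1 ∧ p.val.1 ≠ q.val.2 then 1 else 0

section NonBacktracking

open Finset

variable {V : Type*} [Fintype V]

theorem nbMatrix_mulVec_apply [DecidableEq V] (G : SimpleGraph V) [DecidableRel G.Adj]
    (h : V × V → ℂ) {u v : V} (huv : G.Adj u v) :
    (nbMatrix G).mulVec (fun q => h q.val) ⟨(u, v), huv⟩ =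
      ∑ y ∈ (G.neighborFinset v).erase u, h (v, y) := by
  simp only [Matrix.mulVec, dotProduct, nbMatrix, ite_mul, one_mul, zero_mul, ← sum_filter]
  refine (sum_bij (fun y hy => ⟨(v, y), by simpa using mem_of_mem_erase hy⟩) ?_ ?_ ?_ ?_).symm
  · intro y hy
    exact mem_filter.mpr ⟨mem_univ _, rfl, (ne_of_mem_erase hy).symm⟩
  · intro y _ z _ hyz
    exact congrArg (fun q : DEdge G => q.val.2) hyz
  · rintro ⟨⟨x, y⟩, hxy⟩ hq
    obtain ⟨rfl : v = x, hne : u ≠ y⟩ := (mem_filter.mp hq).2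
    exact ⟨y, mem_erase.mpr ⟨hne.symm, (G.mem_neighborFinset _ _).mpr hxy⟩, rfl⟩
  · exact fun _ _ => rfl

theorem nbMatrix_mulVec_sub_mul_apply (G : SimpleGraph V) [DecidableRel G.Adj]
    (β : ℂ) (f : V → ℂ) {u v : V} (huv : G.Adj u v) :
    (nbMatrix G).mulVec (fun q => f q.val.1 - β * f q.val.2) ⟨(u, v), huv⟩ =
      β * (f u - β * f v) +
        ((β ^ 2 + (G.degree v - 1)) * f v - β * (G.adjMatrix ℂ).mulVec f v) := by
  have hu : u ∈ G.neighborFinset v := (G.mem_neighborFinset _ _).mpr huv.symm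
  calc
    _ = ∑ y ∈ (G.neighborFinset v).erase u, (f v - β * f y) :=
      nbMatrix_mulVec_apply G (fun q => f q.1 - β * f q.2) huv
    _ = ∑ y ∈ G.neighborFinset v, (f v - β * f y) - (f v - β * f u) := sum_erase_eq_sub hu
    _ = G.degree v * f v - β * (G.adjMatrix ℂ).mulVec f v - (f v - β * f u) := by
      rw [sum_sub_distrib, ← mul_sum, sum_const, G.card_neighborFinset_eq_degree, nsmul_eq_mul,
        G.adjMatrix_mulVec_apply]
    _ = _ := by ring

/-- With `D` the diagonal matrix of degrees, `hf` puts `f` in the kernel of the Ihara–Bass matrix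
`β² - β A + (D - 1)`. -/
theorem stmt14_general (G : SimpleGraph V) [DecidableRel G.Adj] (β : ℂ) (f : V → ℂ)
    (hf : ∀ v, β * (G.adjMatrix ℂ).mulVec f v = (β ^ 2 + (G.degree v - 1)) * f v) :
    (nbMatrix G).mulVec (fun p : DEdge G => f p.val.1 - β * f p.val.2)
      = β • (fun p : DEdge G => f p.val.1 - β * f p.val.2) := by
  funext ⟨⟨u, v⟩, huv⟩
  rw [nbMatrix_mulVec_sub_mul_apply, hf, sub_self, add_zero]
  rfl

end NonBacktracking

/-- If `A f = (β + (d-1)/β) f` then `g(u,v) = f(u) - β f(v)` is an eigenvector of the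
non-backtracking matrix with eigenvalue `β`. -/
theorem stmt14 {V : Type*} [Fintype V] [DecidableEq V] {d : ℕ}
    (G : SimpleGraph V) (hreg : G.IsRegularOfDegree d)
    (β : ℂ) (hβ : β ≠ 0) (f : V → ℂ)
    (hf : (G.adjMatrix ℂ).mulVec f = (β + ((d : ℂ) - 1) / β) • f) :
    (nbMatrix G).mulVec (fun p : DEdge G => f p.val.1 - β * f p.val.2)
      = β • (fun p : DEdge G => f p.val.1 - β * f p.val.2) := by
  refine stmt14_general G β f fun v => ?_
  rw [hf, hreg v, Pi.smul_apply, smul_eq_mul]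
  field_simp
end
end

section
/- Let G be a d-regular graph, H a finite abelian group, s a signing of the (oriented) edges of G by elements of H extended to directed edges by s(v,u) = s(u,v)^{−1}, and χ a character of H. Let A be the χ-signed adjacency matrix of G, defined by A(u,v) = χ(s(u,v)) if u and v are adjacent and 0 otherwise, and let B = B_s(χ) be the signed non-backtracking matrix. Let β ∈ ℂ be nonzero and let f : V(G) → ℂ satisfy A f = (β + (d−1)/β) f. Define g on directed edges by g(u,v) = A(u,v)^{−1}·(f(u) − β·A(u,v)·f(v)). Then B g = β g. -/
open scoped Classical

noncomputable section

instance {V : Type*} (G : SimpleGraph V) : DecidableEq (DEdge G) :=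
  Classical.decEq _

/-- The `χ`-signed adjacency matrix of `G`: `A(u,v) = χ(s(u,v))` for adjacent `u, v` and
`0` otherwise. -/
def sAdjMatrix {V : Type*} {H : Type*} [Group H] (G : SimpleGraph V) (s : V → V → H)
    (χ : H →* ℂ) : Matrix V V ℂ :=
  fun u v => if G.Adj u v then χ (s u v) else 0

/-- The signed non-backtracking matrix `B_s(χ)` of `G`: entry at `((u,v),(x,y))` is
`χ(s(x,y))` if `v = x` and `u ≠ y`, and `0` otherwise. -/
def sNbMatrix {V : Type*} {H : Type*} [Group H] (G : SimpleGraph V) (s : V → V → H)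
    (χ : H →* ℂ) : Matrix (DEdge G) (DEdge G) ℂ :=
  fun p q => if p.val.2 = q.val.1 ∧ p.val.1 ≠ q.val.2 then χ (s q.val.1 q.val.2) else 0

/-!
At a directed edge `(u, v)`, the vector `B g` is the sum of `f v - β A(v,w) f w` over all neighbours
`w` of `v`, which is `deg v · f v - β (A f) v`, minus the backtracking term `w = u`. The equation
for `f` turns the full sum into `(1 - β²) f v`, and subtracting `f v - β A(v,u) f u` leaves
`β (A(u,v)⁻¹ f u - β f v) = β g(u,v)`.
-/

section NonBacktracking

open scoped Matrix

variable {V : Type*} {H : Type*} [Group H]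

/-- The lift of a function `f` on vertices to the directed edges,
`g(u,v) = χ(s(u,v))⁻¹ (f(u) - β χ(s(u,v)) f(v))`, turning solutions of the quadratic eigenvalue
problem `(β² - β A + D - 1) f = 0`, with `D` the diagonal matrix of degrees, into solutions of
`B g = β g`. It is given on all pairs of vertices, only its values on adjacent pairs being
relevant. -/
def edgeLift (s : V → V → H) (χ : H →* ℂ) (β : ℂ) (f : V → ℂ) (u v : V) : ℂ :=
  (χ (s u v))⁻¹ * (f u - β * (χ (s u v) * f v))

theorem apply_mul_edgeLift (s : V → V → H) (χ : H →* ℂ) (β : ℂ) (f : V → ℂ) (u v : V) :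
    χ (s u v) * edgeLift s χ β f u v = f u - β * (χ (s u v) * f v) :=
  mul_inv_cancel_left₀ ((Group.isUnit (s u v)).map χ).ne_zero _

variable [Fintype V] (G : SimpleGraph V)

theorem sum_dEdge {M : Type*} [AddCommMonoid M] (F : V → V → M) :
    ∑ q : DEdge G, F q.val.1 q.val.2 = ∑ x, ∑ y ∈ G.neighborFinset x, F x y := by
  simp_rw [SimpleGraph.neighborFinset_eq_filter, Finset.sum_filter]
  rw [← Fintype.sum_prod_type', ← Finset.sum_filter]
  exact (Finset.sum_subtype _ (by simp) fun p : V × V => F p.1 p.2).symm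

theorem sAdjMatrix_mulVec_apply (s : V → V → H) (χ : H →* ℂ) (f : V → ℂ) (v : V) :
    (sAdjMatrix G s χ *ᵥ f) v = ∑ w ∈ G.neighborFinset v, χ (s v w) * f w := by
  simp [Matrix.mulVec, dotProduct, sAdjMatrix, SimpleGraph.neighborFinset_eq_filter,
    Finset.sum_filter]

theorem sNbMatrix_mulVec_apply (s : V → V → H) (χ : H →* ℂ) (g : V → V → ℂ) (p : DEdge G) :
    (sNbMatrix G s χ *ᵥ fun q => g q.val.1 q.val.2) p =
      ∑ w ∈ (G.neighborFinset p.val.2).erase p.val.1, χ (s p.val.2 w) * g p.val.2 w := by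
  obtain ⟨⟨u, v⟩, huv⟩ := p
  calc (sNbMatrix G s χ *ᵥ fun q => g q.val.1 q.val.2) ⟨(u, v), huv⟩
      = ∑ x, ∑ w ∈ G.neighborFinset x, (if v = x ∧ u ≠ w then χ (s x w) else 0) * g x w :=
        sum_dEdge G fun x w => (if v = x ∧ u ≠ w then χ (s x w) else 0) * g x w
    _ = ∑ w ∈ G.neighborFinset v, if w ≠ u then χ (s v w) * g v w else 0 := by
        rw [Fintype.sum_eq_single v fun x hx => by simp [hx.symm]]
        simp [eq_comm]
    _ = ∑ w ∈ (G.neighborFinset v).erase u, χ (s v w) * g v w := by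
        rw [← Finset.sum_filter, Finset.filter_ne']

theorem sNbMatrix_mulVec_edgeLift_apply (s : V → V → H) (χ : H →* ℂ) (β : ℂ) (f : V → ℂ)
    (p : DEdge G) :
    (sNbMatrix G s χ *ᵥ fun q => edgeLift s χ β f q.val.1 q.val.2) p =
      G.degree p.val.2 * f p.val.2 - β * (sAdjMatrix G s χ *ᵥ f) p.val.2
        - (f p.val.2 - β * (χ (s p.val.2 p.val.1) * f p.val.1)) := by
  have hmem : p.val.1 ∈ G.neighborFinset p.val.2 := by
    simpa only [SimpleGraph.mem_neighborFinset] using p.property.symm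
  simp_rw [sNbMatrix_mulVec_apply, apply_mul_edgeLift]
  rw [Finset.sum_erase_eq_sub hmem, Finset.sum_sub_distrib, ← Finset.mul_sum,
    ← sAdjMatrix_mulVec_apply, Finset.sum_const, nsmul_eq_mul,
    SimpleGraph.card_neighborFinset_eq_degree]

theorem stmt15_general (s : V → V → H) (hs : ∀ u v, G.Adj u v → s v u = (s u v)⁻¹)
    (χ : H →* ℂ) (β : ℂ) (f : V → ℂ)
    (hf : ∀ v, β * (sAdjMatrix G s χ *ᵥ f) v = (β ^ 2 + (G.degree v - 1)) * f v) :
    (sNbMatrix G s χ *ᵥ fun p => edgeLift s χ β f p.val.1 p.val.2) =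
      β • fun p : DEdge G => edgeLift s χ β f p.val.1 p.val.2 := by
  funext p
  have hχ : χ (s p.val.1 p.val.2) ≠ 0 := ((Group.isUnit _).map χ).ne_zero
  rw [sNbMatrix_mulVec_edgeLift_apply, hf, hs _ _ p.property, map_inv,
    Pi.smul_apply, smul_eq_mul, edgeLift]
  field_simp
  ring

end NonBacktracking

/-- Signed version: if `A f = (β + (d-1)/β) f` for the `χ`-signed adjacency matrix, then
`g(u,v) = A(u,v)⁻¹ (f(u) - β A(u,v) f(v))` is an eigenvector of `B_s(χ)` with
eigenvalue `β`. -/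
theorem stmt15 {V : Type*} [Fintype V] [DecidableEq V] {d : ℕ}
    (G : SimpleGraph V) (hreg : G.IsRegularOfDegree d)
    {H : Type*} [CommGroup H] [Fintype H]
    (s : V → V → H) (hs : ∀ u v, G.Adj u v → s v u = (s u v)⁻¹)
    (χ : H →* ℂ) (β : ℂ) (hβ : β ≠ 0) (f : V → ℂ)
    (hf : (sAdjMatrix G s χ).mulVec f = (β + ((d : ℂ) - 1) / β) • f) :
    (sNbMatrix G s χ).mulVec
        (fun p : DEdge G => (χ (s p.val.1 p.val.2))⁻¹ *
          (f p.val.1 - β * (χ (s p.val.1 p.val.2) * f p.val.2)))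
      = β • (fun p : DEdge G => (χ (s p.val.1 p.val.2))⁻¹ *
          (f p.val.1 - β * (χ (s p.val.1 p.val.2) * f p.val.2))) := by
  refine stmt15_general G s hs χ β f fun v => ?_
  rw [hf, hreg v, Pi.smul_apply, smul_eq_mul]
  field_simp
end
end
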